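/- arXiv:2403.16098 — 2 statements merged into one kernel-verified Lean document; each statement's English description precedes it below -/
import Mathlib

section
/- Let n, m ≥ 1 and let s, t, r be integers with 2 ≤ s < n, t ≥ 1 and r = s + t ≤ m. Then the set B of all squarefree vectors u : Fin n ⊕ Fin m → ℕ with (|u|_x, |u|_y) = (0, r) or (|u|_x, |u|_y) = (s, t) does NOT satisfy the exchange property; equivalently, the mixed product ideal J_r + I_s·J_t is not polymatroidal. -/
/-- A set `B` of exponent vectors (all of the same total degree) satisfies the exchange
property if for all `u, v ∈ B` and every index `i` with `u i > v i` there is an index `j`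
with `u j < v j` such that `u - e_i + e_j ∈ B`. -/
def ExchangeProperty {σ : Type*} [DecidableEq σ] (B : Set (σ → ℕ)) : Prop :=
  ∀ u ∈ B, ∀ v ∈ B, ∀ i : σ, v i < u i →
    ∃ j : σ, u j < v j ∧
      (fun l => u l - (if l = i then 1 else 0) + (if l = j then 1 else 0)) ∈ B

/-- The indicator of the first `k` indices of `Fin n` has sum `k`. -/
lemma sum_indicator_val_lt {n k : ℕ} (hk : k ≤ n) :
    (∑ i : Fin n, if i.val < k then 1 else 0) = k := by
  simp [Fin.card_filter_val_lt, hk]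

/-- For `2 ≤ s < n`, `t ≥ 1` and `r = s + t ≤ m`, the mixed product ideal
`J_r + I_s J_t` is not polymatroidal: its set of exponent vectors does not satisfy
the exchange property. -/
theorem Jr_plus_IsJt_not_polymatroidal (n m : ℕ) (hn : 1 ≤ n) (hm : 1 ≤ m)
    (s t r : ℕ) (hs : 2 ≤ s) (hsn : s < n) (ht : 1 ≤ t) (hr : r = s + t) (hrm : r ≤ m) :
    ¬ ExchangeProperty {u : Fin n ⊕ Fin m → ℕ |
      (∀ l, u l ≤ 1) ∧
      (((∑ i : Fin n, u (Sum.inl i)) = 0 ∧ (∑ j : Fin m, u (Sum.inr j)) = r) ∨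
       ((∑ i : Fin n, u (Sum.inl i)) = s ∧ (∑ j : Fin m, u (Sum.inr j)) = t))} := by
  intro h
  obtain ⟨j, hj, -, hB⟩ := h
    (Sum.elim (fun i => if i.val < s then 1 else 0) (fun j => if j.val < t then 1 else 0))
    ⟨by rintro (l | l) <;> simp <;> split_ifs <;> simp,
      Or.inr ⟨sum_indicator_val_lt hsn.le, sum_indicator_val_lt (by omega)⟩⟩
    (Sum.elim (fun _ => 0) (fun j => if j.val < r then 1 else 0))
    ⟨by rintro (l | l) <;> simp; split_ifs <;> simp,
      Or.inl ⟨by simp, sum_indicator_val_lt hrm⟩⟩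
    (Sum.inl ⟨0, hn⟩) (by simp [show 0 < s by omega])
  rcases j with j | j
  · simp at hj
  · -- the exchanged vector has `x`-degree `s - 1`, which is neither `0` nor `s`
    have hx : (∑ i : Fin n, (((if i.val < s then 1 else 0) -
        (if i = ⟨0, hn⟩ then 1 else 0) : ℕ))) + 1 = s := by
      have hone : (∑ i : Fin n, if i = ⟨0, hn⟩ then 1 else 0) = 1 := by simp
      refine Eq.trans ?_ (sum_indicator_val_lt hsn.le)
      refine (congrArg _ hone.symm).trans ?_
      rw [← Finset.sum_add_distrib]
      refine Finset.sum_congr rfl fun i _ => Nat.sub_add_cancel ?_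
      split_ifs with hi his
      · rfl
      · subst hi
        exact absurd (show 0 < s by omega) his
      all_goals exact Nat.zero_le _
    simp only [Sum.elim_inl, Sum.inl.injEq, reduceCtorEq, if_false, add_zero] at hB
    omega
end

section
/- Let n, m ≥ 1 and let q ≥ 0 and r ≥ 1 be integers. Then the set B of ALL vectors u : Fin n ⊕ Fin m → ℕ (not necessarily squarefree) with (|u|_x, |u|_y) = (q, r) or (|u|_x, |u|_y) = (q+1, r−1) satisfies the exchange property; equivalently, the sum of products of Veronese ideals (x_1,…,x_n)^q·(y_1,…,y_m)^r + (x_1,…,x_n)^{q+1}·(y_1,…,y_m)^{r−1} is polymatroidal. -/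
theorem sum_tsub_single_add_one {ι : Type*} [Fintype ι] [DecidableEq ι] (f : ι → ℕ) {i : ι}
    (hi : 0 < f i) : (∑ l, (f l - if l = i then 1 else 0)) + 1 = ∑ l, f l := by
  have hsplit : ∀ l, f l = (f l - if l = i then 1 else 0) + if l = i then 1 else 0 := by
    intro l
    split_ifs with h
    · subst h; omega
    · simp
  conv_rhs => rw [Finset.sum_congr rfl fun l _ => hsplit l, Finset.sum_add_distrib]
  simp

theorem exists_lt_or_sum_lt {ι : Type*} [Fintype ι] {f g : ι → ℕ} {i : ι} (hi : g i < f i) :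
    (∃ j, f j < g j) ∨ ∑ l, g l < ∑ l, f l := by
  by_cases h : ∃ j, f j < g j
  · exact Or.inl h
  · push Not at h
    exact Or.inr (Finset.sum_lt_sum (fun l _ => h l) ⟨i, Finset.mem_univ i, hi⟩)

/-- The sum of products of Veronese ideals
`(x_1,…,x_n)^q (y_1,…,y_m)^r + (x_1,…,x_n)^{q+1} (y_1,…,y_m)^{r-1}` is polymatroidal:
the set of all (not necessarily squarefree) exponent vectors of the prescribed bidegrees
satisfies the exchange property. -/
theorem veronese_two_step_polymatroidal (n m : ℕ) (hn : 1 ≤ n) (hm : 1 ≤ m)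
    (q r : ℕ) (hr : 1 ≤ r) :
    ExchangeProperty {u : Fin n ⊕ Fin m → ℕ |
      (((∑ i : Fin n, u (Sum.inl i)) = q ∧ (∑ j : Fin m, u (Sum.inr j)) = r) ∨
       ((∑ i : Fin n, u (Sum.inl i)) = q + 1 ∧ (∑ j : Fin m, u (Sum.inr j)) = r - 1))} := by
  intro u hu v hv i hi
  simp only [Set.mem_ofPred_eq] at hu hv ⊢
  rcases i with i | i
  · have hsub := sum_tsub_single_add_one (fun l => u (Sum.inl l)) (Nat.zero_lt_of_lt hi)
    rcases exists_lt_or_sum_lt (f := fun l => u (Sum.inl l)) (g := fun l => v (Sum.inl l)) hi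
      with ⟨j, hj⟩ | hlt
    · refine ⟨Sum.inl j, hj, ?_⟩
      simp [Finset.sum_add_distrib]
      omega
    · obtain ⟨j, -, hj⟩ : ∃ j ∈ Finset.univ, u (Sum.inr j) < v (Sum.inr j) :=
        Finset.exists_lt_of_sum_lt (by omega)
      refine ⟨Sum.inr j, hj, ?_⟩
      simp [Finset.sum_add_distrib]
      omega
  · have hsub := sum_tsub_single_add_one (fun l => u (Sum.inr l)) (Nat.zero_lt_of_lt hi)
    rcases exists_lt_or_sum_lt (f := fun l => u (Sum.inr l)) (g := fun l => v (Sum.inr l)) hi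
      with ⟨j, hj⟩ | hlt
    · refine ⟨Sum.inr j, hj, ?_⟩
      simp [Finset.sum_add_distrib]
      omega
    · obtain ⟨j, -, hj⟩ : ∃ j ∈ Finset.univ, u (Sum.inl j) < v (Sum.inl j) :=
        Finset.exists_lt_of_sum_lt (by omega)
      refine ⟨Sum.inl j, hj, ?_⟩
      simp [Finset.sum_add_distrib]
      omega
end
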